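/- Let H be a finite simple graph with at least one vertex. Then the spectral radius of its corona with K_1 satisfies ρ(H∘K_1) = (ρ(H) + √(ρ(H)² + 4))/2. -/

import Mathlib

open SimpleGraph

/-- Adjacency matrix of a simple graph over ℝ. -/
noncomputable def adjMat {V : Type*} (G : SimpleGraph V) : Matrix V V ℝ :=
  Matrix.of fun i j => @ite ℝ (G.Adj i j) (Classical.propDecidable _) 1 0

/-- Spectral radius: the largest eigenvalue (supremum of the real spectrum)
of the adjacency matrix. -/
noncomputable def specRad {V : Type*} [Fintype V] [DecidableEq V]
    (G : SimpleGraph V) : ℝ :=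
  sSup (spectrum ℝ (adjMat G))

/-- `D` is a dominating set of `G`. -/
def IsDomSet {V : Type*} (G : SimpleGraph V) (D : Finset V) : Prop :=
  ∀ v ∉ D, ∃ u ∈ D, G.Adj u v

/-- The domination number of `G`. -/
noncomputable def domNum {V : Type*} [Fintype V] (G : SimpleGraph V) : ℕ :=
  sInf {k | ∃ D : Finset V, IsDomSet G D ∧ D.card = k}

/-- The corona `H ∘ K₁`: each vertex `v` of `H` (copied as `Sum.inl v`) gets a new
pendant neighbour `Sum.inr v`. -/
def corona {V : Type*} (H : SimpleGraph V) : SimpleGraph (V ⊕ V) :=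
  SimpleGraph.fromRel (fun x y =>
    (∃ u v, x = Sum.inl u ∧ y = Sum.inl v ∧ H.Adj u v) ∨
    (∃ v, x = Sum.inl v ∧ y = Sum.inr v))

/-!
Ordering the vertices of `H ∘ K₁` as `V ⊕ V`, its adjacency matrix is `[A, 1; 1, 0]` with `A` that
of `H`. It is invertible, and for `t ≠ 0` the Schur complement of the lower right block `t` of
`t - [A, 1; 1, 0]` is `(t - t⁻¹) - A`, so the eigenvalues of the corona are the `t ≠ 0` for which
`t - t⁻¹` is an eigenvalue of `H`. As `t - t⁻¹` is increasing on the positive reals, the largest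
such `t` is the positive solution of `t - t⁻¹ = ρ(H)`.
-/

section BlockMatrix

variable {n : Type*} [DecidableEq n]

/-- The block matrix `[A, 1; 1, 0]`, which is the adjacency matrix of `H ∘ K₁` when `A` is that
of `H`. -/
def coronaMatrix {R : Type*} [Zero R] [One R] (A : Matrix n n R) : Matrix (n ⊕ n) (n ⊕ n) R :=
  Matrix.fromBlocks A 1 1 0

variable [Fintype n]

lemma isUnit_coronaMatrix {R : Type*} [Ring R] (A : Matrix n n R) :
    IsUnit (coronaMatrix A) :=
  isUnit_iff_exists.2 ⟨Matrix.fromBlocks 0 1 1 (-A),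
    by simp [coronaMatrix, Matrix.fromBlocks_multiply],
    by simp [coronaMatrix, Matrix.fromBlocks_multiply]⟩

lemma algebraMap_sub_coronaMatrix {R : Type*} [CommRing R] (A : Matrix n n R) (t : R) :
    algebraMap R _ t - coronaMatrix A =
      Matrix.fromBlocks (algebraMap R _ t - A) (-1) (-1) (algebraMap R _ t) := by
  ext (i | i) (j | j) <;> simp [coronaMatrix, Matrix.algebraMap_matrix_apply]

lemma mem_spectrum_coronaMatrix_iff {K : Type*} [Field K] {A : Matrix n n K} {t : K} :
    t ∈ spectrum K (coronaMatrix A) ↔ t ≠ 0 ∧ t - t⁻¹ ∈ spectrum K A := by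
  rcases eq_or_ne t 0 with rfl | ht
  · simpa using (spectrum.zero_notMem_iff K).2 (isUnit_coronaMatrix A)
  let : Invertible t := invertibleOfNonzero ht
  let : Invertible (algebraMap K (Matrix n n K) t) := Invertible.map (algebraMap K _) t
  have schur_complement : algebraMap K (Matrix n n K) t - A - -1 * ⅟(algebraMap K _ t) * -1 =
      algebraMap K _ (t - t⁻¹) - A := by
    rw [← map_invOf (algebraMap K (Matrix n n K)) t, invOf_eq_inv, map_sub]
    noncomm_ring
  rw [spectrum.mem_iff, spectrum.mem_iff, algebraMap_sub_coronaMatrix,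
    Matrix.isUnit_fromBlocks_iff_of_invertible₂₂, schur_complement, and_iff_right ht]

end BlockMatrix

section SubInv

lemma strictMonoOn_sub_inv {K : Type*} [Field K] [LinearOrder K] [IsStrictOrderedRing K] :
    StrictMonoOn (fun t : K ↦ t - t⁻¹) (Set.Ioi 0) :=
  fun _ hs _ ht hst ↦ sub_lt_sub hst (strictAntiOn_inv_pos hs ht hst)

/-- The positive solution `t` of `t - t⁻¹ = r`, that is, the positive root of `t² - r t - 1`. -/
noncomputable def subInvRoot (r : ℝ) : ℝ :=
  (r + √(r ^ 2 + 4)) / 2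

lemma subInvRoot_pos (r : ℝ) : 0 < subInvRoot r := by
  have abs_lt_sqrt : |r| < √(r ^ 2 + 4) := Real.lt_sqrt_of_sq_lt (by rw [sq_abs]; linarith)
  rw [subInvRoot]
  linarith [neg_abs_le r]

lemma subInvRoot_sub_inv (r : ℝ) : subInvRoot r - (subInvRoot r)⁻¹ = r := by
  have sq_sqrt : √(r ^ 2 + 4) ^ 2 = r ^ 2 + 4 := Real.sq_sqrt (by positivity)
  have inv_eq : (subInvRoot r)⁻¹ = subInvRoot r - r := by
    refine inv_eq_of_mul_eq_one_right ?_
    rw [subInvRoot]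
    linear_combination sq_sqrt / 4
  rw [inv_eq, sub_sub_cancel]

lemma isGreatest_subInvRoot {S : Set ℝ} {r : ℝ} (hr : IsGreatest S r) :
    IsGreatest {t | t ≠ 0 ∧ t - t⁻¹ ∈ S} (subInvRoot r) := by
  refine ⟨⟨(subInvRoot_pos r).ne', by rw [subInvRoot_sub_inv]; exact hr.1⟩, ?_⟩
  rintro t ⟨-, ht⟩
  by_contra! root_lt
  have lt_sub_inv : r < t - t⁻¹ := by
    simpa only [subInvRoot_sub_inv] using
      strictMonoOn_sub_inv (subInvRoot_pos r) ((subInvRoot_pos r).trans root_lt) root_lt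
  exact lt_sub_inv.not_ge (hr.2 ht)

end SubInv

section Graph

variable {V : Type*}

lemma adjMat_eq_adjMatrix (G : SimpleGraph V) [DecidableRel G.Adj] : adjMat G = G.adjMatrix ℝ := by
  ext i j
  simp [adjMat, adjMatrix_apply]

lemma isHermitian_adjMat (G : SimpleGraph V) : (adjMat G).IsHermitian := by
  classical
  rw [adjMat_eq_adjMatrix]
  exact G.isHermitian_adjMatrix ℝ

lemma isGreatest_specRad [Fintype V] [DecidableEq V] [Nonempty V] (G : SimpleGraph V) :
    IsGreatest (spectrum ℝ (adjMat G)) (specRad G) := by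
  have spectrum_nonempty : (spectrum ℝ (adjMat G)).Nonempty :=
    ⟨_, (isHermitian_adjMat G).eigenvalues_mem_spectrum_real (Classical.arbitrary V)⟩
  exact Matrix.finite_real_spectrum.isCompact.isGreatest_sSup spectrum_nonempty

@[simp]
lemma corona_adj_inl_inl {H : SimpleGraph V} {u v : V} :
    (corona H).Adj (.inl u) (.inl v) ↔ H.Adj u v := by
  simpa [corona, H.adj_comm v u] using H.ne_of_adj

@[simp]
lemma corona_adj_inl_inr {H : SimpleGraph V} {u v : V} :
    (corona H).Adj (.inl u) (.inr v) ↔ u = v := by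
  simp [corona, eq_comm]

@[simp]
lemma corona_adj_inr_inl {H : SimpleGraph V} {u v : V} :
    (corona H).Adj (.inr u) (.inl v) ↔ u = v := by
  rw [adj_comm, corona_adj_inl_inr, eq_comm]

@[simp]
lemma not_corona_adj_inr_inr {H : SimpleGraph V} {u v : V} :
    ¬(corona H).Adj (.inr u) (.inr v) := by
  simp [corona]

lemma adjMat_corona [DecidableEq V] (H : SimpleGraph V) :
    adjMat (corona H) = coronaMatrix (adjMat H) := by
  classical
  ext (i | i) (j | j) <;> simp [adjMat_eq_adjMatrix, coronaMatrix, Matrix.one_apply]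

lemma spectrum_adjMat_corona [Fintype V] [DecidableEq V] (H : SimpleGraph V) :
    spectrum ℝ (adjMat (corona H)) = {t | t ≠ 0 ∧ t - t⁻¹ ∈ spectrum ℝ (adjMat H)} := by
  rw [adjMat_corona]
  exact Set.ext fun _ ↦ mem_spectrum_coronaMatrix_iff

end Graph

theorem specRad_corona {V : Type*} [Fintype V] [DecidableEq V] [Nonempty V]
    (H : SimpleGraph V) :
    specRad (corona H) = (specRad H + Real.sqrt (specRad H ^ 2 + 4)) / 2 := by
  have corona_greatest := isGreatest_specRad (corona H)
  rw [spectrum_adjMat_corona] at corona_greatest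
  exact corona_greatest.unique (isGreatest_subInvRoot (isGreatest_specRad H))
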